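/- For m marked vertices and a fixed removed column c, the m−1 spanning forest identities L_{m,c}(1), ..., L_{m,c}(m−1) (one for each column expansion index) sum to an identity whose left-hand side is (m−1)·Φ_{(1,1,...,1)}·Φ_{(1,2,...,m)} and whose right-hand side contains exactly one copy of each permissible AB monomial (i.e., each non-forbidden pair (A,B) with A an (m−1)-part partition and B a 2-part partition of the marked vertices such that the two vertices paired in A lie in different parts of B). -/

import Mathlib

open Finset

/-- Determinant of the minor of the `ℕ`-indexed matrix `M` obtained by restricting to
rows `{0,...,n-1} \ I` and columns `{0,...,n-1} \ J` (in increasing order). -/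
noncomputable def minorDet {R : Type*} [CommRing R] (M : Matrix ℕ ℕ R) (n : ℕ)
    (I J : Finset ℕ) : R :=
  if h : (Finset.range n \ J).card = (Finset.range n \ I).card then
    Matrix.det (Matrix.of fun i j : Fin (Finset.range n \ I).card =>
      M (((Finset.range n \ I).orderIsoOfFin rfl i : ℕ))
        (((Finset.range n \ J).orderIsoOfFin h j : ℕ)))
  else 0


/-- The weighted Laplacian of the complete graph on vertices `{0,…,n−1}` with symmetric
edge weights `a`: `L_{ii} = Σ_{l≠i} a_{il}` and `L_{ij} = −a_{ij}` for `i ≠ j`. -/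
noncomputable def lap {R : Type*} [CommRing R] (a : ℕ → ℕ → R) (n : ℕ) :
    Matrix ℕ ℕ R :=
  fun i j => if i = j then ∑ l ∈ Finset.range n \ {i}, a i l else -(a i j)

/-- Skipping map: `skip t` enumerates `{0,1,2,…} ∖ {t}` in increasing order, so that
index `i` of the matrix with row (or column) `t` removed corresponds to original index
`skip t i`. -/
def skip (t i : ℕ) : ℕ := if i < t then i else i + 1

/-- The right-hand side `L_{r,c}(j)` of the spanning forest identity obtained by
substituting the Laplacian minor `L_{r,c}` (row `r` and column `c` removed, with
`r, c < m = k + 1` marked vertices among `n` vertices) for `M` in the `j`-th column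
expansion identity (`0 ≤ j < k = m − 1`):
`(−1)^{r+c} · Σ_{i<k} (−1)^{i+j} det(L_{{skip r i, r},{skip c j, c}})
  · det(L_{[m]∖{skip r i},[m]∖{skip c j}})`
(the factor `(−1)^{r+c}` normalises `det L_{r,c}` to the spanning tree polynomial, so
that the left-hand side of the identity is `Φ_{(1,…,1)} Φ_{(1,2,…,m)}`). -/
noncomputable def lapRHS {R : Type*} [CommRing R] (a : ℕ → ℕ → R) (n m r c j : ℕ) : R :=
  (-1 : R) ^ (r + c) *
  ∑ i ∈ Finset.range (m - 1), (-1 : R) ^ (i + j) *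
    (minorDet (lap a n) n {r, skip r i} {c, skip c j} *
      minorDet (lap a n) n (Finset.range m \ {skip r i}) (Finset.range m \ {skip c j}))

/-- A finite edge set `F` is a spanning forest of `G` compatible with the set partition of
(a subset of) the marked vertices `v : Fin m → V` encoded by `p : Fin m → Option ℕ`
(`p i = none` means vertex `i` is unconstrained, `p i = some ℓ` means vertex `i` lies in
the part labelled `ℓ`): the edges of `F` lie in `G`, `F` is acyclic, two constrained
marked vertices lie in the same tree iff they have the same label, and every vertex of
the graph lies in the tree of some constrained marked vertex (so the trees of the forest
are in bijection with the parts of the partition). -/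
def IsCompatibleForest {V : Type*} [Fintype V] [DecidableEq V] (G : SimpleGraph V) {m : ℕ}
    (v : Fin m → V) (p : Fin m → Option ℕ) (F : Finset (Sym2 V)) : Prop :=
  (F : Set (Sym2 V)) ⊆ G.edgeSet ∧
  (SimpleGraph.fromEdgeSet (F : Set (Sym2 V))).IsAcyclic ∧
  (∀ i j : Fin m, p i ≠ none → p j ≠ none →
    ((SimpleGraph.fromEdgeSet (F : Set (Sym2 V))).Reachable (v i) (v j) ↔ p i = p j)) ∧
  (∀ w : V, ∃ i : Fin m, p i ≠ none ∧
    (SimpleGraph.fromEdgeSet (F : Set (Sym2 V))).Reachable w (v i))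

/-- The spanning forest sum `Σ_{F ∼ P} Π_{e ∈ F} x_e` of the graph `G` with edge
weights `x`, marked vertices `v`, and partition `P` encoded by `p`, in the
included-edge-weight convention in which the all-minors matrix tree theorem expresses
determinants of Laplacian minors (the paper's omitted-edge polynomials `Π_{e ∉ F} a_e`
satisfy exactly the same quadratic identities, by the substitution `a_e ↦ 1/a_e`). -/
noncomputable def forestPoly {V : Type*} [Fintype V] [DecidableEq V] {R : Type*}
    [CommRing R] (G : SimpleGraph V) [DecidableRel G.Adj] (x : Sym2 V → R) {m : ℕ}
    (v : Fin m → V) (p : Fin m → Option ℕ) : R :=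
  ∑ F ∈ G.edgeFinset.powerset,
    (letI := Classical.dec (IsCompatibleForest G v p F)
     if IsCompatibleForest G v p F then ∏ e ∈ F, x e else 0)

/-!
Let `M` be the set of marked vertices, `L` the Laplacian and `K` its response matrix with boundary
`M`, and let `N s t` be the signed minor of `L` without the rows `r`, `s` and the columns `c`, `t`.
The identity with column `t` has right-hand side `∑ s, N s t * K s t`, which Jacobi's identity for
complementary minors evaluates as the product of the principal minors off `{r}` and off `M`.

In the sum over all `t`, we may replace `N s t` by `N s t - N s s`, because `N s c = 0` and the rows
of `K` sum to zero. By the matrix-forest theorem, `N s s - N s t` counts the two-tree forests that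
separate `s` from `t` and `r`, and `-K s t` counts the forests for the partition pairing `s` with
`t`. As `K` is symmetric and `r` lies in exactly one of the two trees, the terms `(s, t)` and
`(t, s)` together contribute `-K s t` times the number of all two-tree forests separating `s` from
`t`, and those are classified by the partition they induce on `M`.

The matrix-forest theorem itself follows by expanding each row `v` of `L` over the edges at `v`.
This gives a sum over maps `f : V → V`, whose determinants vanish unless iterating `f` leads every
vertex to a root.
-/

section LinearAlgebra

open Matrix

variable {V R : Type*} [DecidableEq V] [CommRing R]

/-- The matrix `A` with the rows indexed by `W` replaced by those of the identity. For a
Laplacian this imposes Dirichlet boundary conditions on `W`, and the determinant is that of the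
principal minor on the complement of `W`. -/
def dirichlet (W : Finset V) (A : Matrix V V R) : Matrix V V R :=
  fun v => if v ∈ W then Pi.single v 1 else A v

variable {W M : Finset V} {v r c s t : V}

theorem dirichlet_apply_of_mem (A : Matrix V V R) (hv : v ∈ W) :
    dirichlet W A v = Pi.single v 1 := if_pos hv

theorem dirichlet_apply_of_notMem (A : Matrix V V R) (hv : v ∉ W) : dirichlet W A v = A v :=
  if_neg hv

theorem dirichlet_updateRow_of_mem (A : Matrix V V R) (hr : r ∈ W) (b : V → R) :
    dirichlet W (A.updateRow r b) = dirichlet W A := by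
  funext v
  by_cases hv : v ∈ W
  · simp only [dirichlet_apply_of_mem _ hv]
  · rw [dirichlet_apply_of_notMem _ hv, dirichlet_apply_of_notMem _ hv,
      updateRow_ne (ne_of_mem_of_not_mem hr hv).symm]

theorem dirichlet_updateRow_single_self (W : Finset V) (A : Matrix V V R) (s : V) :
    (dirichlet W A).updateRow s (Pi.single s 1) = dirichlet (insert s W) A := by
  funext v
  by_cases hv : v = s
  · simp [dirichlet, hv]
  · simp [dirichlet, hv]

theorem dirichlet_empty (A : Matrix V V R) : dirichlet ∅ A = A := by
  funext v
  exact dirichlet_apply_of_notMem A (notMem_empty v)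

variable [Fintype V]

theorem det_updateRow_eq_vecMul_adjugate (A : Matrix V V R) (i : V) (b : V → R) :
    (A.updateRow i b).det = (b ᵥ* A.adjugate) i := by
  rw [← cramer_transpose_apply, cramer_eq_adjugate_mulVec, ← adjugate_transpose, mulVec_transpose]

theorem det_updateRow_of_mulVec_eq_single {A : Matrix V V R} {u : V → R} {i : V}
    (h : A *ᵥ u = Pi.single i 1) (b : V → R) :
    (A.updateRow i b).det = (b ⬝ᵥ u) * A.det :=
  calc (A.updateRow i b).det = (b ᵥ* A.adjugate) ⬝ᵥ A *ᵥ u := by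
        rw [h, dotProduct_single_one, det_updateRow_eq_vecMul_adjugate]
    _ = (b ⬝ᵥ u) * A.det := by
        rw [dotProduct_mulVec, vecMul_vecMul, adjugate_mul, vecMul_smul, vecMul_one,
          smul_dotProduct, smul_eq_mul, mul_comm]

theorem det_updateRow_single_eq_det_dirichlet {A : Matrix V V R} (hA : A *ᵥ 1 = 0) (r c : V) :
    (A.updateRow r (Pi.single c 1)).det = (dirichlet {r} A).det := by
  have hr : A.updateRow r (Pi.single r 1) = dirichlet {r} A := by
    rw [← LawfulSingleton.insert_empty_eq, ← dirichlet_updateRow_single_self, dirichlet_empty]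
  have h : dirichlet {r} A *ᵥ 1 = Pi.single r 1 := by
    rw [← hr, updateRow_mulVec, hA, single_one_dotProduct]
    rfl
  simpa only [← hr, updateRow_idem, single_one_dotProduct, Pi.one_apply, one_mul] using
    det_updateRow_of_mulVec_eq_single h (Pi.single c 1)

theorem det_eq_zero_of_mulVec_eq_zero_of_apply_eq_one {A : Matrix V V R} {z : V → R} {i : V}
    (hz : A *ᵥ z = 0) (hi : z i = 1) : A.det = 0 :=
  det_eq_zero_of_mulVec_eq_zero_of_mem_nonZeroDivisors hz (i := i) (hi ▸ one_mem _)

theorem dirichlet_mulVec_one {A : Matrix V V R} (hA : A *ᵥ 1 = 0) (W : Finset V) :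
    dirichlet W A *ᵥ 1 = fun v => if v ∈ W then 1 else 0 := by
  funext v
  by_cases hv : v ∈ W
  · simp [mulVec, dirichlet_apply_of_mem A hv, hv]
  · simpa [mulVec, dirichlet_apply_of_notMem A hv, hv] using congrFun hA v

theorem adjugate_dirichlet_apply_self (A : Matrix V V R) (ht : t ∈ W) :
    (dirichlet W A).adjugate t t = (dirichlet W A).det := by
  rw [adjugate_apply, ← dirichlet_apply_of_mem A ht, updateRow_eq_self]

/-- The response matrix (Dirichlet-to-Neumann map) of the Laplacian `A` with boundary `M`, scaled
by `det (dirichlet M A)` to avoid division. -/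
def responseMatrix (M : Finset V) (A : Matrix V V R) : Matrix V V R :=
  A * (dirichlet M A).adjugate

theorem responseMatrix_apply (M : Finset V) (A : Matrix V V R) (s t : V) :
    responseMatrix M A s t = ((dirichlet M A).updateRow t (A s)).det := by
  rw [responseMatrix, mul_apply_eq_vecMul, det_updateRow_eq_vecMul_adjugate]

theorem responseMatrix_apply_eq_neg_det (A : Matrix V V R) (hs : s ∈ M) (hst : s ≠ t) :
    responseMatrix M A s t =
      -((dirichlet (M.erase s) A).updateRow t (Pi.single s 1)).det := by
  have hswap : (dirichlet M A).updateRow t (A s) =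
      ((dirichlet (M.erase s) A).updateRow t (Pi.single s 1)).submatrix (Equiv.swap s t) id := by
    ext v w
    rw [submatrix_apply, id]
    rcases eq_or_ne v t with rfl | hvt
    · rw [Equiv.swap_apply_right, updateRow_self, updateRow_ne hst,
        dirichlet_apply_of_notMem A (notMem_erase s M)]
    rw [updateRow_ne hvt]
    rcases eq_or_ne v s with rfl | hvs
    · rw [Equiv.swap_apply_left, updateRow_self, dirichlet_apply_of_mem A hs]
    · simp only [Equiv.swap_apply_of_ne_of_ne hvs hvt, updateRow_ne hvt, dirichlet, mem_erase,
        ne_eq, hvs, not_false_eq_true, true_and]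
  rw [responseMatrix_apply, hswap, det_permute, Equiv.Perm.sign_swap hst, Units.val_neg,
    Units.val_one, Int.cast_neg, Int.cast_one, neg_one_mul]

theorem responseMatrix_apply_of_notMem (A : Matrix V V R) (hs : s ∉ M) (ht : t ∈ M) :
    responseMatrix M A s t = 0 := by
  rw [responseMatrix, mul_apply_eq_vecMul, ← dirichlet_apply_of_notMem A hs,
    ← mul_apply_eq_vecMul, mul_adjugate, Matrix.smul_apply,
    one_apply_ne (ne_of_mem_of_not_mem ht hs).symm, smul_zero]

theorem sum_responseMatrix_apply_eq_zero {A : Matrix V V R} (hA : A *ᵥ 1 = 0) (M : Finset V)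
    (s : V) : ∑ t ∈ M, responseMatrix M A s t = 0 := by
  have h : responseMatrix M A *ᵥ (dirichlet M A *ᵥ 1) = 0 := by
    rw [responseMatrix, mulVec_mulVec, Matrix.mul_assoc, adjugate_mul, Matrix.mul_smul,
      Matrix.mul_one, smul_mulVec, hA, smul_zero]
  rw [dirichlet_mulVec_one hA] at h
  simpa [mulVec, dotProduct] using congrFun h s

/-- A form of Jacobi's identity for complementary minors. -/
theorem sum_adjugate_mul_responseMatrix (A : Matrix V V R) (ht : t ∈ M) :
    ∑ s ∈ M, A.adjugate t s * responseMatrix M A s t = A.det * (dirichlet M A).det :=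
  calc ∑ s ∈ M, A.adjugate t s * responseMatrix M A s t
      = (A.adjugate * responseMatrix M A) t t := by
        refine sum_subset (subset_univ M) fun s _ hs => ?_
        rw [responseMatrix_apply_of_notMem A hs ht, mul_zero]
    _ = A.det * (dirichlet M A).det := by
        rw [responseMatrix, ← Matrix.mul_assoc, adjugate_mul, smul_mul, Matrix.one_mul,
          Matrix.smul_apply, adjugate_dirichlet_apply_self A ht, smul_eq_mul]

/-- The minor of `A` without the rows `r`, `s` and the columns `c`, `t`, with the sign it carries
in the Laplace expansion of `A.det`. -/
def signedMinor (A : Matrix V V R) (r c s t : V) : R :=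
  ((A.updateRow r (Pi.single c 1)).updateRow s (Pi.single t 1)).det

theorem sum_signedMinor_mul_responseMatrix {A : Matrix V V R} (hA : A *ᵥ 1 = 0) (hr : r ∈ M)
    (hc : c ∈ M) (ht : t ∈ M) (htc : t ≠ c) :
    ∑ s ∈ M.erase r, signedMinor A r c s t * responseMatrix M A s t =
      (dirichlet {r} A).det * (dirichlet M A).det := by
  set B := A.updateRow r (Pi.single c 1) with hB
  have hBM : dirichlet M B = dirichlet M A := dirichlet_updateRow_of_mem A hr _
  have hrow : responseMatrix M B r t = 0 := by
    rw [responseMatrix_apply]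
    refine det_zero_of_row_eq htc ?_
    rw [updateRow_self, updateRow_ne htc.symm, dirichlet_apply_of_mem B hc, hB, updateRow_self]
  have hrows : ∀ s ∈ M.erase r, signedMinor A r c s t * responseMatrix M A s t =
      B.adjugate t s * responseMatrix M B s t := by
    intro s hs
    rw [signedMinor, adjugate_apply, responseMatrix_apply, responseMatrix_apply, hBM, hB,
      updateRow_ne (ne_of_mem_erase hs)]
  rw [sum_congr rfl hrows, sum_erase M (by rw [hrow, mul_zero]),
    sum_adjugate_mul_responseMatrix B ht, hB, det_updateRow_single_eq_det_dirichlet hA, ← hB, hBM]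

/-- The self-maps of `V` that fix every point of `W`. -/
def mapsFixing (W : Finset V) : Finset (V → V) :=
  Fintype.piFinset fun v => if v ∈ W then {v} else univ

theorem mem_mapsFixing {f : V → V} : f ∈ mapsFixing W ↔ ∀ v ∈ W, f v = v := by
  refine Fintype.mem_piFinset.trans (forall_congr' fun v => ?_)
  by_cases hv : v ∈ W <;> simp [hv]

theorem det_eq_sum_mapsFixing (W : Finset V) (y : V → V → R) (a : V → V → R)
    (z : V → V → V → R) :
    det (fun v => if v ∈ W then y v else ∑ u, a v u • z v u) =
      ∑ f ∈ mapsFixing W, (∏ v ∈ Wᶜ, a v (f v)) *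
        det (fun v => if v ∈ W then y v else z v (f v)) := by
  let rows : V → V → V → R := fun v u => if v ∈ W then y v else a v u • z v u
  calc det (fun v => if v ∈ W then y v else ∑ u, a v u • z v u)
      = detRowAlternating (fun v => ∑ u ∈ if v ∈ W then {v} else univ, rows v u) := by
        congr 1
        funext v
        by_cases hv : v ∈ W <;> simp [rows, hv]
    _ = ∑ f ∈ mapsFixing W, detRowAlternating fun v => rows v (f v) :=
        detRowAlternating.toMultilinearMap.map_sum_finset _ _
    _ = _ := by
        refine sum_congr rfl fun f _ => ?_
        have h := detRowAlternating.toMultilinearMap.map_smul_univ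
          (fun v => if v ∈ W then 1 else a v (f v)) fun v => if v ∈ W then y v else z v (f v)
        refine .trans (congrArg detRowAlternating ?_) (h.trans ?_)
        · funext v
          by_cases hv : v ∈ W <;> simp [rows, hv]
        · rw [prod_ite, prod_const_one, one_mul, smul_eq_mul, filter_notMem_eq_sdiff,
            compl_eq_univ_sdiff]
          rfl

end LinearAlgebra

section RootedForests

variable {V : Type*}

/-- The graph with edge set `F`; diagonal elements of `F` are ignored. -/
abbrev edgeGraph (F : Finset (Sym2 V)) : SimpleGraph V := SimpleGraph.fromEdgeSet (F : Set (Sym2 V))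

/-- `F` is the edge set of a spanning forest of the complete graph in which every tree contains
exactly one vertex of `W`, its root. -/
structure IsRootedForest (W : Finset V) (F : Finset (Sym2 V)) : Prop where
  subset_edgeSet : (F : Set (Sym2 V)) ⊆ (⊤ : SimpleGraph V).edgeSet
  isAcyclic : (edgeGraph F).IsAcyclic
  existsUnique_root : ∀ v, ∃! w, w ∈ W ∧ (edgeGraph F).Reachable v w

namespace IsRootedForest

variable {W : Finset V} {E F : Finset (Sym2 V)} {p q u v : V}

theorem eq_of_reachable (h : IsRootedForest W F) (hp : p ∈ W) (hq : q ∈ W)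
    (hpq : (edgeGraph F).Reachable p q) : p = q :=
  (h.existsUnique_root p).unique ⟨hp, .rfl⟩ ⟨hq, hpq⟩

theorem edgeSet_edgeGraph (h : IsRootedForest W F) : (edgeGraph F).edgeSet = F := by
  rw [SimpleGraph.edgeSet_fromEdgeSet]
  refine sdiff_eq_left.2 (Set.disjoint_left.2 fun e he hdiag => ?_)
  exact SimpleGraph.not_isDiag_of_mem_edgeSet _ (h.subset_edgeSet he) hdiag

theorem eq_of_subset (hE : IsRootedForest W E) (hF : IsRootedForest W F) (hsub : E ⊆ F) :
    E = F := by
  have hle : edgeGraph E ≤ edgeGraph F := SimpleGraph.fromEdgeSet_mono (coe_subset.2 hsub)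
  have hreach : (edgeGraph E).Reachable = (edgeGraph F).Reachable := by
    funext u v
    refine propext ⟨fun huv => huv.mono hle, fun huv => ?_⟩
    obtain ⟨a, ⟨ha, hua⟩, -⟩ := hE.existsUnique_root u
    obtain ⟨b, ⟨hb, hvb⟩, -⟩ := hE.existsUnique_root v
    obtain rfl : a = b :=
      hF.eq_of_reachable ha hb ((hua.mono hle).symm.trans (huv.trans (hvb.mono hle)))
    exact hua.trans hvb.symm
  -- `E` is a maximal acyclic subgraph of `F`, which is itself acyclic.
  have hmax := (SimpleGraph.maximal_isAcyclic_iff_reachable_eq hle hE.isAcyclic).2 hreach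
  have hgraph : edgeGraph E = edgeGraph F := hmax.eq_of_le ⟨le_rfl, hF.isAcyclic⟩ hle
  rw [← coe_inj, ← hE.edgeSet_edgeGraph, ← hF.edgeSet_edgeGraph, hgraph]

end IsRootedForest

/-- Iterating `f` from any starting point eventually hits `W`. -/
def FlowsInto (W : Finset V) (f : V → V) : Prop := ∀ v, ∃ k, f^[k] v ∈ W

theorem FlowsInto.exists_potential {W : Finset V} {f : V → V} (h : FlowsInto W f) :
    ∃ d : V → ℕ, ∀ v ∉ W, d (f v) < d v := by
  classical
  refine ⟨fun v => Nat.find (h v), fun v hv => ?_⟩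
  obtain ⟨k, hk⟩ : ∃ k, Nat.find (h v) = k + 1 :=
    Nat.exists_eq_succ_of_ne_zero fun h0 => hv (h0 ▸ Nat.find_spec (h v) :)
  have hmem : f^[k] (f v) ∈ W := (hk ▸ Nat.find_spec (h v) :)
  exact (Nat.find_min' (h (f v)) hmem).trans_lt (k.lt_succ_self.trans_eq hk.symm)

theorem flowsInto_of_potential {W : Finset V} {f : V → V} (d : V → ℕ)
    (hd : ∀ v ∉ W, d (f v) < d v) : FlowsInto W f := by
  intro v
  induction v using (measure d).wf.induction with
  | _ v ih =>
    by_cases hv : v ∈ W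
    · exact ⟨0, hv⟩
    · obtain ⟨k, hk⟩ := ih (f v) (hd v hv)
      exact ⟨k + 1, hk⟩

variable [Fintype V] [DecidableEq V] {W : Finset V} {f g : V → V} {F : Finset (Sym2 V)} {u v w : V}

/-- The edges `{v, f v}` with `v` outside `W`. -/
def mapEdges (W : Finset V) (f : V → V) : Finset (Sym2 V) := Wᶜ.image fun v => s(v, f v)

theorem adj_edgeGraph_mapEdges :
    (edgeGraph (mapEdges W f)).Adj u v ↔ u ≠ v ∧ (u ∉ W ∧ f u = v ∨ v ∉ W ∧ f v = u) := by
  rw [SimpleGraph.fromEdgeSet_adj, mem_coe, mapEdges, mem_image, and_comm]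
  refine and_congr_right fun _ => ⟨?_, ?_⟩
  · rintro ⟨w, hw, h⟩
    rcases Sym2.eq_iff.1 h with ⟨rfl, hfw⟩ | ⟨rfl, hfw⟩
    · exact .inl ⟨mem_compl.1 hw, hfw⟩
    · exact .inr ⟨mem_compl.1 hw, hfw⟩
  · rintro (⟨hu, rfl⟩ | ⟨hv, rfl⟩)
    · exact ⟨u, mem_compl.2 hu, rfl⟩
    · exact ⟨v, mem_compl.2 hv, Sym2.eq_swap⟩

theorem reachable_mapEdges_iterate (hf : f ∈ mapsFixing W) (v : V) (k : ℕ) :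
    (edgeGraph (mapEdges W f)).Reachable v (f^[k] v) := by
  induction k generalizing v with
  | zero => rfl
  | succ k ih =>
    refine .trans ?_ (ih (f v))
    by_cases hv : f v = v
    · rw [hv]
    · have hvW : v ∉ W := fun h => hv (mem_mapsFixing.1 hf v h)
      exact (adj_edgeGraph_mapEdges.2 ⟨Ne.symm hv, .inl ⟨hvW, rfl⟩⟩).reachable

theorem reachable_mapEdges_iff (hf : f ∈ mapsFixing W) (hw : w ∈ W) :
    (edgeGraph (mapEdges W f)).Reachable v w ↔ ∃ k, f^[k] v = w := by
  refine ⟨?_, fun ⟨k, hk⟩ => hk ▸ reachable_mapEdges_iterate hf v k⟩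
  rintro ⟨p⟩
  induction p with
  | nil => exact ⟨0, rfl⟩
  | cons hadj _ ih =>
    obtain ⟨k, hk⟩ := ih hw
    rcases (adj_edgeGraph_mapEdges.1 hadj).2 with ⟨_, rfl⟩ | ⟨hu, rfl⟩
    · exact ⟨k + 1, hk⟩
    · cases k with
      | zero =>
        obtain rfl := hk
        exact absurd hw hu
      | succ k => exact ⟨k, hk⟩

theorem FlowsInto.isAcyclic_mapEdges (h : FlowsInto W f) :
    (edgeGraph (mapEdges W f)).IsAcyclic := by
  obtain ⟨d, hd⟩ := h.exists_potential
  intro v c hc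
  obtain ⟨w, hw, hmax⟩ := exists_max_image c.support.toFinset d ⟨v, by simp⟩
  rw [List.mem_toFinset] at hw
  -- Both neighbours on the cycle of a vertex of maximal potential would be its image under `f`.
  have eq_image : ∀ u ∈ (c.rotate w hw).support, (edgeGraph (mapEdges W f)).Adj w u → u = f w := by
    intro u hu hwu
    have hle : d u ≤ d w := hmax u (by simpa using hu)
    rcases (adj_edgeGraph_mapEdges.1 hwu).2 with ⟨_, hfw⟩ | ⟨huW, hfu⟩
    · exact hfw.symm
    · exact absurd (hfu ▸ hd u huW) hle.not_gt
  have hrot := hc.rotate hw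
  have hsnd := eq_image _ (SimpleGraph.Walk.getVert_mem_support ..)
    (SimpleGraph.Walk.adj_snd hrot.not_nil)
  have hpen := eq_image _ (SimpleGraph.Walk.getVert_mem_support ..)
    (SimpleGraph.Walk.adj_penultimate hrot.not_nil).symm
  exact hrot.snd_ne_penultimate (hsnd.trans hpen.symm)

theorem FlowsInto.isRootedForest_mapEdges (h : FlowsInto W f) (hf : f ∈ mapsFixing W) :
    IsRootedForest W (mapEdges W f) where
  subset_edgeSet := by
    obtain ⟨d, hd⟩ := h.exists_potential
    intro e he
    obtain ⟨v, hv, rfl⟩ := mem_image.1 he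
    have hne : v ≠ f v := fun hfv => (hd v (mem_compl.1 hv)).ne (congrArg d hfv.symm)
    simpa using hne
  isAcyclic := h.isAcyclic_mapEdges
  existsUnique_root v := by
    obtain ⟨k, hk⟩ := h v
    refine ⟨f^[k] v, ⟨hk, reachable_mapEdges_iterate hf v k⟩, ?_⟩
    rintro w ⟨hw, hvw⟩
    obtain ⟨l, rfl⟩ := (reachable_mapEdges_iff hf hw).1 hvw
    rw [← Function.iterate_fixed (mem_mapsFixing.1 hf _ hw) k,
      ← Function.iterate_fixed (mem_mapsFixing.1 hf _ hk) l, ← Function.iterate_add_apply,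
      ← Function.iterate_add_apply, add_comm]

theorem FlowsInto.eq_of_mapEdges_eq (h : FlowsInto W f) (hf : f ∈ mapsFixing W)
    (hg : g ∈ mapsFixing W) (hfg : mapEdges W f = mapEdges W g) : f = g := by
  obtain ⟨d, hd⟩ := h.exists_potential
  funext v
  induction v using (measure d).wf.induction with
  | _ v ih =>
    by_cases hv : v ∈ W
    · rw [mem_mapsFixing.1 hf v hv, mem_mapsFixing.1 hg v hv]
    have hmem : s(v, f v) ∈ mapEdges W g := hfg ▸ mem_image_of_mem _ (mem_compl.2 hv)
    obtain ⟨w, hw, hwv⟩ := mem_image.1 hmem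
    rcases Sym2.eq_iff.1 hwv with ⟨rfl, hgw⟩ | ⟨rfl, hgw⟩
    · exact hgw.symm
    · have hlt := hd _ (mem_compl.1 hw)
      rw [ih _ (hd v hv), hgw] at hlt
      exact absurd hlt (hd v hv).not_gt

theorem FlowsInto.injOn_edge (h : FlowsInto W f) :
    Set.InjOn (fun v => s(v, f v)) (Wᶜ : Finset V) := by
  obtain ⟨d, hd⟩ := h.exists_potential
  intro u hu v hv huv
  rcases Sym2.eq_iff.1 huv with ⟨huv, _⟩ | ⟨hufv, hfuv⟩
  · exact huv
  · have hu' := hd u (mem_compl.1 hu)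
    have hv' := hd v (mem_compl.1 hv)
    rw [hfuv] at hu'
    rw [← hufv] at hv'
    exact absurd hu' hv'.not_gt

theorem IsRootedForest.exists_mapEdges_subset (h : IsRootedForest W F) :
    ∃ f ∈ mapsFixing W, FlowsInto W f ∧ mapEdges W f ⊆ F := by
  choose root hroot root_unique using h.existsUnique_root
  have root_eq_of_adj : ∀ {u v}, (edgeGraph F).Adj v u → root u = root v := fun {u v} hadj =>
    root_unique v _ ⟨(hroot u).1, hadj.reachable.trans (hroot u).2⟩
  have exists_next : ∀ v, ∃ u, (v ∈ W → u = v) ∧ (v ∉ W → (edgeGraph F).Adj v u ∧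
      (edgeGraph F).dist u (root u) < (edgeGraph F).dist v (root v)) := by
    intro v
    by_cases hv : v ∈ W
    · exact ⟨v, fun _ => rfl, absurd hv⟩
    obtain ⟨p, hp⟩ := (hroot v).2.exists_walk_length_eq_dist
    have hnil : ¬ p.Nil := SimpleGraph.Walk.not_nil_of_ne fun hvr => hv (hvr ▸ (hroot v).1)
    refine ⟨p.snd, fun h => absurd h hv, fun _ => ⟨p.adj_snd hnil, ?_⟩⟩
    rw [root_eq_of_adj (p.adj_snd hnil), ← hp, ← SimpleGraph.Walk.length_tail_add_one hnil]
    exact Nat.lt_succ_of_le (SimpleGraph.dist_le p.tail)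
  choose f hfix hnext using exists_next
  refine ⟨f, mem_mapsFixing.2 hfix, flowsInto_of_potential
    (fun v => (edgeGraph F).dist v (root v)) fun v hv => (hnext v hv).2, fun e he => ?_⟩
  obtain ⟨v, hv, rfl⟩ := mem_image.1 he
  exact ((SimpleGraph.fromEdgeSet_adj _).1 (hnext v (mem_compl.1 hv)).1).1

theorem IsRootedForest.exists_mapEdges_eq (h : IsRootedForest W F) :
    ∃ f ∈ mapsFixing W, FlowsInto W f ∧ mapEdges W f = F := by
  obtain ⟨f, hf, hflow, hsub⟩ := h.exists_mapEdges_subset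
  exact ⟨f, hf, hflow, (hflow.isRootedForest_mapEdges hf).eq_of_subset h hsub⟩

end RootedForests

section MatrixForest

open Matrix

variable {V R : Type*} [Fintype V] [CommRing R]

open Classical in
/-- The total weight of the edge sets satisfying `P`, where a set has the product of the weights of
its elements as weight. -/
noncomputable def weightSum (x : Sym2 V → R) (P : Finset (Sym2 V) → Prop) : R :=
  ∑ F with P F, ∏ e ∈ F, x e

theorem weightSum_congr (x : Sym2 V → R) {P Q : Finset (Sym2 V) → Prop} (h : ∀ F, P F ↔ Q F) :
    weightSum x P = weightSum x Q :=
  congrArg (weightSum x) (funext fun F => propext (h F))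

theorem weightSum_eq_zero (x : Sym2 V → R) {P : Finset (Sym2 V) → Prop} (h : ∀ F, ¬ P F) :
    weightSum x P = 0 := by
  simp only [weightSum, h, filter_false, sum_empty]

theorem weightSum_and_add_weightSum_and_not (x : Sym2 V → R) (P Q : Finset (Sym2 V) → Prop) :
    weightSum x (fun F => P F ∧ Q F) + weightSum x (fun F => P F ∧ ¬ Q F) = weightSum x P := by
  classical
  simp only [weightSum, ← filter_filter]
  exact sum_filter_add_sum_filter_not _ _ _

theorem weightSum_eq_sum_of_existsUnique {ι : Type*} (x : Sym2 V → R) {s : Finset ι}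
    {P : Finset (Sym2 V) → Prop} {Q : ι → Finset (Sym2 V) → Prop}
    (h : ∀ F, P F → ∃! i, i ∈ s ∧ Q i F) :
    weightSum x P = ∑ i ∈ s, weightSum x fun F => P F ∧ Q i F := by
  classical
  simp only [weightSum, ← filter_filter]
  simp only [sum_filter (fun F => Q _ F)]
  rw [sum_comm]
  refine sum_congr rfl fun F hF => ?_
  obtain ⟨i, ⟨hi, hQ⟩, huniq⟩ := h F (mem_filter.1 hF).2
  rw [sum_eq_single_of_mem i hi fun j hj hji => if_neg fun hQj => hji (huniq j ⟨hj, hQj⟩),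
    if_pos hQ]

variable [DecidableEq V] {W : Finset V} {f : V → V}

open Classical in
theorem sum_mapsFixing_eq_weightSum (W : Finset V) (x : Sym2 V → R)
    (Q : Finset (Sym2 V) → Prop) :
    ∑ f ∈ mapsFixing W with FlowsInto W f ∧ Q (mapEdges W f), ∏ v ∈ Wᶜ, x s(v, f v) =
      weightSum x fun F => IsRootedForest W F ∧ Q F := by
  refine sum_nbij (mapEdges W) (fun f hf => ?_) (fun f hf g hg hfg => ?_) (fun F hF => ?_)
    fun f hf => ?_
  · obtain ⟨hfix, hflow, hQ⟩ := mem_filter.1 hf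
    simpa only [mem_filter_univ] using ⟨hflow.isRootedForest_mapEdges hfix, hQ⟩
  · obtain ⟨hfix, hflow, -⟩ := mem_filter.1 hf
    exact hflow.eq_of_mapEdges_eq hfix (mem_filter.1 hg).1 hfg
  · obtain ⟨hforest, hQ⟩ : IsRootedForest W F ∧ Q F := by
      simpa only [coe_filter_univ, Set.mem_ofPred_eq] using hF
    obtain ⟨f, hfix, hflow, rfl⟩ := hforest.exists_mapEdges_eq
    exact ⟨f, mem_filter.2 ⟨hfix, hflow, hQ⟩, rfl⟩
  · rw [mapEdges, prod_image (mem_filter.1 hf).2.1.injOn_edge]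

variable (R) in
/-- The transition matrix `1 - P` of the deterministic walk along `f`; it is the Laplacian of the
directed graph with edges `v → f v`. -/
def stepMatrix (f : V → V) : Matrix V V R := fun v => Pi.single v 1 - Pi.single (f v) 1

theorem dirichlet_stepMatrix_mulVec_apply (W : Finset V) (f : V → V) (z : V → R) (v : V) :
    (dirichlet W (stepMatrix R f) *ᵥ z) v = if v ∈ W then z v else z v - z (f v) := by
  by_cases hv : v ∈ W
  · simp [mulVec, dirichlet_apply_of_mem _ hv, hv]
  · rw [mulVec, dirichlet_apply_of_notMem _ hv, stepMatrix, sub_dotProduct, single_one_dotProduct,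
      single_one_dotProduct, if_neg hv]

theorem det_dirichlet_stepMatrix_of_flowsInto (h : FlowsInto W f) :
    (dirichlet W (stepMatrix R f)).det = 1 := by
  obtain ⟨d, hd⟩ := h.exists_potential
  have entry : ∀ i j, i ≠ j → d i ≤ d j → dirichlet W (stepMatrix R f) i j = 0 := by
    intro i j hij hle
    by_cases hi : i ∈ W
    · rw [dirichlet_apply_of_mem _ hi, Pi.single_eq_of_ne hij.symm]
    · have hj : j ≠ f i := fun hj => (hd i hi).not_ge (hj ▸ hle)
      rw [dirichlet_apply_of_notMem _ hi, stepMatrix, Pi.sub_apply, Pi.single_eq_of_ne hij.symm,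
        Pi.single_eq_of_ne hj, sub_zero]
  have diag : ∀ i, dirichlet W (stepMatrix R f) i i = 1 := by
    intro i
    by_cases hi : i ∈ W
    · rw [dirichlet_apply_of_mem _ hi, Pi.single_eq_same]
    · have hfi : i ≠ f i := fun hfi => (hd i hi).ne (congrArg d hfi.symm)
      rw [dirichlet_apply_of_notMem _ hi, stepMatrix, Pi.sub_apply, Pi.single_eq_same,
        Pi.single_eq_of_ne hfi, sub_zero]
  have htri : (dirichlet W (stepMatrix R f)).BlockTriangular fun v => OrderDual.toDual (d v) :=
    fun i j hij => entry i j (fun h => (h ▸ hij).false) (OrderDual.toDual_lt_toDual.1 hij).le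
  rw [htri.det]
  refine prod_eq_one fun k _ => (congrArg det ?_).trans det_one
  ext i j
  rcases eq_or_ne i j with rfl | hij
  · exact (diag i).trans (one_apply_eq i).symm
  · have hd_eq : d i = d j := i.2.trans j.2.symm
    exact (entry i j (Subtype.coe_ne_coe.2 hij) hd_eq.le).trans (one_apply_ne hij).symm

theorem det_dirichlet_stepMatrix_of_not_flowsInto (h : ¬ FlowsInto W f) :
    (dirichlet W (stepMatrix R f)).det = 0 := by
  classical
  obtain ⟨v, hv⟩ : ∃ v, ∀ k, f^[k] v ∉ W := by simpa [FlowsInto] using h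
  -- The indicator of the points that never reach `W` is harmonic.
  refine det_eq_zero_of_mulVec_eq_zero_of_apply_eq_one
    (z := fun u => if ∀ k, f^[k] u ∉ W then 1 else 0) (i := v) (funext fun u => ?_) (if_pos hv)
  rw [dirichlet_stepMatrix_mulVec_apply, Pi.zero_apply]
  by_cases hu : u ∈ W
  · rw [if_pos hu, if_neg fun hnever => hnever 0 hu]
  · have hstep : (∀ k, f^[k] u ∉ W) ↔ ∀ k, f^[k] (f u) ∉ W :=
      ⟨fun hnever k => hnever (k + 1), fun hnever k => k.casesOn hu hnever⟩
    rw [if_neg hu, if_congr hstep rfl rfl, sub_self]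

open Classical in
theorem det_updateRow_dirichlet_stepMatrix (hf : f ∈ mapsFixing W) {q : V} (hq : q ∈ W) (p : V) :
    ((dirichlet W (stepMatrix R f)).updateRow q (Pi.single p 1)).det =
      if FlowsInto W f ∧ (edgeGraph (mapEdges W f)).Reachable p q then 1 else 0 := by
  have hsolve : dirichlet W (stepMatrix R f) *ᵥ (fun v => if ∃ k, f^[k] v = q then 1 else 0) =
      Pi.single q 1 := by
    funext v
    rw [dirichlet_stepMatrix_mulVec_apply]
    by_cases hv : v ∈ W
    · have hiter : (∃ k, f^[k] v = q) ↔ v = q :=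
        ⟨fun ⟨k, hk⟩ => Function.iterate_fixed (mem_mapsFixing.1 hf v hv) k ▸ hk,
          fun h => ⟨0, h⟩⟩
      rw [if_pos hv, if_congr hiter rfl rfl, Pi.single_apply]
    · have hvq : v ≠ q := fun h => hv (h ▸ hq)
      have hstep : (∃ k, f^[k] v = q) ↔ ∃ k, f^[k] (f v) = q :=
        ⟨fun ⟨k, hk⟩ => ⟨k - 1, by cases k <;> [exact absurd hk hvq; exact hk]⟩,
          fun ⟨k, hk⟩ => ⟨k + 1, hk⟩⟩
      rw [if_neg hv, if_congr hstep rfl rfl, sub_self, Pi.single_eq_of_ne hvq]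
  rw [det_updateRow_of_mulVec_eq_single hsolve, single_one_dotProduct,
    if_congr (reachable_mapEdges_iff hf hq).symm rfl rfl]
  by_cases hflow : FlowsInto W f
  · simp only [det_dirichlet_stepMatrix_of_flowsInto hflow, hflow, true_and, mul_one]
  · simp only [det_dirichlet_stepMatrix_of_not_flowsInto hflow, hflow, false_and, if_false,
      mul_zero]

/-- The Laplacian of the complete graph on `V` with edge weights `x`. -/
def weightedLaplacian (x : Sym2 V → R) : Matrix V V R :=
  fun v => ∑ u, x s(v, u) • (Pi.single v 1 - Pi.single u 1)

theorem weightedLaplacian_mulVec_one (x : Sym2 V → R) : weightedLaplacian x *ᵥ 1 = 0 := by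
  funext v
  rw [mulVec, weightedLaplacian, sum_dotProduct]
  simp only [smul_dotProduct, sub_dotProduct, single_one_dotProduct, Pi.one_apply, sub_self,
    smul_zero, sum_const_zero, Pi.zero_apply]

theorem det_updateRow_dirichlet_weightedLaplacian (x : Sym2 V → R) {q : V} (hq : q ∈ W) (p : V) :
    ((dirichlet W (weightedLaplacian x)).updateRow q (Pi.single p 1)).det =
      weightSum x fun F => IsRootedForest W F ∧ (edgeGraph F).Reachable p q := by
  classical
  let y : V → V → R := fun v => if v = q then Pi.single p 1 else Pi.single v 1
  have hrows : ∀ A : Matrix V V R, (dirichlet W A).updateRow q (Pi.single p 1) =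
      fun v => if v ∈ W then y v else A v := by
    intro A
    funext v
    rcases eq_or_ne v q with rfl | hv
    · rw [updateRow_self, if_pos hq]
      exact (if_pos rfl).symm
    · rw [updateRow_ne hv]
      exact congrArg (ite (v ∈ W) · (A v)) (if_neg hv).symm
  calc ((dirichlet W (weightedLaplacian x)).updateRow q (Pi.single p 1)).det
      = ∑ f ∈ mapsFixing W, (∏ v ∈ Wᶜ, x s(v, f v)) *
          ((dirichlet W (stepMatrix R f)).updateRow q (Pi.single p 1)).det := by
        simp only [hrows]
        exact det_eq_sum_mapsFixing W y (fun v u => x s(v, u)) fun v u =>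
          Pi.single v 1 - Pi.single u 1
    _ = ∑ f ∈ mapsFixing W with FlowsInto W f ∧ (edgeGraph (mapEdges W f)).Reachable p q,
          ∏ v ∈ Wᶜ, x s(v, f v) := by
        rw [sum_filter]
        refine sum_congr rfl fun f hf => ?_
        rw [det_updateRow_dirichlet_stepMatrix hf hq, mul_ite, mul_one, mul_zero]
    _ = weightSum x fun F => IsRootedForest W F ∧ (edgeGraph F).Reachable p q := by
        convert sum_mapsFixing_eq_weightSum W x fun F => (edgeGraph F).Reachable p q

theorem det_dirichlet_weightedLaplacian (x : Sym2 V → R) (hW : W.Nonempty) :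
    (dirichlet W (weightedLaplacian x)).det = weightSum x (IsRootedForest W) := by
  obtain ⟨q, hq⟩ := hW
  have h := det_updateRow_dirichlet_weightedLaplacian x hq q
  rw [dirichlet_updateRow_single_self, insert_eq_of_mem hq] at h
  rw [h]
  exact weightSum_congr x fun F => and_iff_left .rfl

end MatrixForest

section ResponseForests

open Matrix

variable {V R : Type*} [DecidableEq V] [CommRing R]
variable {W M : Finset V} {F : Finset (Sym2 V)} {p q r c s t : V}

theorem IsRootedForest.exchange_root (h : IsRootedForest (insert p W) F) (hp : p ∉ W)
    (hpq : (edgeGraph F).Reachable p q) : IsRootedForest (insert q W) F where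
  subset_edgeSet := h.subset_edgeSet
  isAcyclic := h.isAcyclic
  existsUnique_root v := by
    obtain ⟨w, ⟨hw, hvw⟩, huniq⟩ := h.existsUnique_root v
    have eq_of_mem : ∀ w' ∈ W, (edgeGraph F).Reachable v w' → w' = w := fun w' hw' hvw' =>
      huniq w' ⟨mem_insert_of_mem hw', hvw'⟩
    rcases mem_insert.1 hw with rfl | hwW
    · refine ⟨q, ⟨mem_insert_self q W, hvw.trans hpq⟩, ?_⟩
      rintro w' ⟨hw', hvw'⟩
      rcases mem_insert.1 hw' with rfl | hw'W
      · rfl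
      · exact absurd (eq_of_mem w' hw'W hvw' ▸ hw'W) hp
    · refine ⟨w, ⟨mem_insert_of_mem hwW, hvw⟩, ?_⟩
      rintro w' ⟨hw', hvw'⟩
      rcases mem_insert.1 hw' with rfl | hw'W
      · have hpw : p = w := huniq p ⟨mem_insert_self p W, hvw'.trans hpq.symm⟩
        exact absurd (hpw ▸ hwW) hp
      · exact eq_of_mem w' hw'W hvw'

theorem isRootedForest_insert_comm (hp : p ∉ W) (hq : q ∉ W)
    (hpq : (edgeGraph F).Reachable p q) :
    IsRootedForest (insert p W) F ↔ IsRootedForest (insert q W) F :=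
  ⟨fun h => h.exchange_root hp hpq, fun h => h.exchange_root hq hpq.symm⟩

theorem IsRootedForest.reachable_or_reachable (h : IsRootedForest {p, q} F) (v : V) :
    (edgeGraph F).Reachable v p ∨ (edgeGraph F).Reachable v q := by
  obtain ⟨w, ⟨hw, hvw⟩, -⟩ := h.existsUnique_root v
  rcases mem_insert.1 hw with rfl | hw
  · exact .inl hvw
  · exact .inr (mem_singleton.1 hw ▸ hvw)

theorem IsRootedForest.not_reachable (h : IsRootedForest {p, q} F) (hpq : p ≠ q) :
    ¬ (edgeGraph F).Reachable p q := fun hreach =>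
  hpq (h.eq_of_reachable (mem_insert_self p _) (mem_insert_of_mem (mem_singleton_self q)) hreach)

theorem IsRootedForest.not_reachable_iff (h : IsRootedForest {p, q} F) (hpq : p ≠ q) {v : V} :
    ¬ (edgeGraph F).Reachable v q ↔ (edgeGraph F).Reachable v p :=
  ⟨(h.reachable_or_reachable v).resolve_right, fun hvp hvq =>
    h.not_reachable hpq (hvp.symm.trans hvq)⟩

variable [Fintype V]

theorem responseMatrix_weightedLaplacian_apply (x : Sym2 V → R) (hs : s ∈ M) (ht : t ∈ M)
    (hst : s ≠ t) :
    responseMatrix M (weightedLaplacian x) s t =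
      -weightSum x fun F => IsRootedForest (M.erase s) F ∧ (edgeGraph F).Reachable s t := by
  rw [responseMatrix_apply_eq_neg_det _ hs hst,
    det_updateRow_dirichlet_weightedLaplacian x (mem_erase.2 ⟨hst.symm, ht⟩)]

theorem responseMatrix_weightedLaplacian_comm (x : Sym2 V → R) (hs : s ∈ M) (ht : t ∈ M) :
    responseMatrix M (weightedLaplacian x) s t = responseMatrix M (weightedLaplacian x) t s := by
  rcases eq_or_ne s t with rfl | hst
  · rfl
  rw [responseMatrix_weightedLaplacian_apply x hs ht hst,
    responseMatrix_weightedLaplacian_apply x ht hs hst.symm]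
  refine congrArg Neg.neg (weightSum_congr x fun F => ?_)
  rw [SimpleGraph.reachable_comm]
  refine and_congr_left fun hts => ?_
  rw [← insert_erase (mem_erase.2 ⟨hst.symm, ht⟩), ← insert_erase (mem_erase.2 ⟨hst, hs⟩),
    erase_right_comm (a := t)]
  exact isRootedForest_insert_comm (notMem_erase t _)
    (fun h => notMem_erase s M (mem_of_mem_erase h)) hts

/-- The weighted count of the two-tree spanning forests separating `s` from `t` and `r`. -/
noncomputable def separatingSum (x : Sym2 V → R) (r s t : V) : R :=
  weightSum x fun F => IsRootedForest {s, t} F ∧ (edgeGraph F).Reachable r t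

theorem separatingSum_self_left (x : Sym2 V → R) (hrt : r ≠ t) : separatingSum x r r t = 0 :=
  weightSum_eq_zero x fun _ h => h.1.not_reachable hrt h.2

theorem separatingSum_add_separatingSum (x : Sym2 V → R) (r : V) (hst : s ≠ t) :
    separatingSum x r s t + separatingSum x r t s = weightSum x (IsRootedForest {s, t}) := by
  rw [← weightSum_and_add_weightSum_and_not x _ fun F => (edgeGraph F).Reachable r t]
  refine congrArg (separatingSum x r s t + ·) (weightSum_congr x fun F => ?_)
  rw [pair_comm]
  exact and_congr_right fun h => (h.not_reachable_iff hst).symm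

theorem signedMinor_sub_signedMinor (x : Sym2 V → R) (c : V) (hsr : s ≠ r) (hst : s ≠ t) :
    signedMinor (weightedLaplacian x) r c s s - signedMinor (weightedLaplacian x) r c s t =
      separatingSum x r s t := by
  set L := weightedLaplacian x
  set b : V → R := Pi.single s 1 - Pi.single t 1 with hb
  have hLb : L.updateRow s b *ᵥ (1 : V → R) = 0 := by
    rw [updateRow_mulVec, weightedLaplacian_mulVec_one, hb, sub_dotProduct,
      single_one_dotProduct, single_one_dotProduct, Pi.one_apply, Pi.one_apply, sub_self]
    exact Function.update_eq_self s (0 : V → R)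
  have hdir : dirichlet {r} (L.updateRow s b) = (dirichlet {s, r} L).updateRow s b := by
    rw [← dirichlet_updateRow_single_self, updateRow_idem]
    funext v
    rcases eq_or_ne v s with rfl | hvs
    · rw [updateRow_self, dirichlet_apply_of_notMem _ (notMem_singleton.2 hsr), updateRow_self]
    · simp [dirichlet, updateRow_ne hvs]
  calc signedMinor L r c s s - signedMinor L r c s t
      = ((L.updateRow r (Pi.single c 1)).updateRow s b).det :=
        (detRowAlternating.toMultilinearMap.map_update_sub
          (L.updateRow r (Pi.single c 1)) s _ _).symm
    _ = ((dirichlet {s, r} L).updateRow s b).det := by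
        rw [updateRow_comm _ hsr.symm, det_updateRow_single_eq_det_dirichlet hLb, hdir]
    _ = ((dirichlet {s, r} L).updateRow s (Pi.single s 1)).det -
          ((dirichlet {s, r} L).updateRow s (Pi.single t 1)).det :=
        detRowAlternating.toMultilinearMap.map_update_sub (dirichlet {s, r} L) s _ _
    _ = weightSum x (IsRootedForest {s, r}) -
          weightSum x (fun F => IsRootedForest {s, r} F ∧ (edgeGraph F).Reachable t s) := by
        rw [dirichlet_updateRow_single_self, insert_eq_of_mem (mem_insert_self s _),
          det_dirichlet_weightedLaplacian x (insert_nonempty s _),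
          det_updateRow_dirichlet_weightedLaplacian x (mem_insert_self s _)]
    _ = weightSum x (fun F => IsRootedForest {s, r} F ∧ ¬ (edgeGraph F).Reachable t s) :=
        sub_eq_iff_eq_add'.2 (weightSum_and_add_weightSum_and_not x _ _).symm
    _ = separatingSum x r s t := weightSum_congr x fun F => by
        rw [pair_comm s r, pair_comm s t, SimpleGraph.reachable_comm (u := r)]
        refine .trans (and_congr_right fun h => h.not_reachable_iff hsr.symm)
          (and_congr_left fun htr => ?_)
        exact isRootedForest_insert_comm (notMem_singleton.2 hsr.symm)
          (notMem_singleton.2 hst.symm) htr.symm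

theorem signedMinor_self_right (A : Matrix V V R) (hsr : s ≠ r) (c : V) :
    signedMinor A r c s c = 0 :=
  det_zero_of_row_eq hsr (by rw [updateRow_self, updateRow_ne hsr.symm, updateRow_self])

theorem sum_signedMinor_mul_responseMatrix_weightedLaplacian (x : Sym2 V → R)
    (M : Finset V) (r c : V) :
    ∑ t ∈ M.erase c, ∑ s ∈ M.erase r, signedMinor (weightedLaplacian x) r c s t *
        responseMatrix M (weightedLaplacian x) s t =
      ∑ s ∈ M, ∑ t ∈ M.erase s,
        -responseMatrix M (weightedLaplacian x) s t * separatingSum x r s t := by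
  set K := responseMatrix M (weightedLaplacian x)
  have hr_term : ∑ t ∈ M.erase r, -K r t * separatingSum x r r t = 0 :=
    sum_eq_zero fun t ht => by
      rw [separatingSum_self_left x (ne_of_mem_erase ht).symm, mul_zero]
  rw [sum_comm, ← sum_erase M hr_term]
  refine sum_congr rfl fun s hs => ?_
  have hsr := ne_of_mem_erase hs
  calc ∑ t ∈ M.erase c, signedMinor (weightedLaplacian x) r c s t * K s t
      = ∑ t ∈ M, signedMinor (weightedLaplacian x) r c s t * K s t :=
        sum_erase M (by rw [signedMinor_self_right _ hsr, zero_mul])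
    _ = ∑ t ∈ M, -K s t * (signedMinor (weightedLaplacian x) r c s s -
          signedMinor (weightedLaplacian x) r c s t) := by
        have hK : ∑ t ∈ M, K s t * signedMinor (weightedLaplacian x) r c s s = 0 := by
          rw [← sum_mul, sum_responseMatrix_apply_eq_zero (weightedLaplacian_mulVec_one x) M s,
            zero_mul]
        simp only [neg_mul, mul_sub, sum_sub_distrib, sum_neg_distrib, hK]
        simp only [neg_zero, zero_sub, neg_neg, mul_comm]
    _ = ∑ t ∈ M.erase s, -K s t * separatingSum x r s t := by
        rw [← sum_erase M (a := s) (by rw [sub_self, mul_zero])]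
        refine sum_congr rfl fun t ht => ?_
        rw [signedMinor_sub_signedMinor x c hsr (ne_of_mem_erase ht).symm]

end ResponseForests

section MarkedVertices

variable {V R : Type*} [Fintype V] [DecidableEq V] [CommRing R] {m : ℕ}

theorem forestPoly_top_eq_weightSum (x : Sym2 V → R) (v : Fin m → V) (p : Fin m → Option ℕ) :
    forestPoly ⊤ x v p = weightSum x (IsCompatibleForest ⊤ v p) := by
  classical
  rw [weightSum, sum_filter, forestPoly]
  refine sum_subset_zero_on_sdiff (subset_univ _) (fun F hF => if_neg fun h => ?_) fun F _ => by
    congr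
  exact (mem_sdiff.1 hF).2 (mem_powerset.2 fun e he => SimpleGraph.mem_edgeFinset.2 (h.1 he))

theorem isCompatibleForest_top_iff (v : Fin m ↪ V) {p : Fin m → Option ℕ} {rep : Fin m → Fin m}
    (hp : ∀ i, p i ≠ none) (hrep : ∀ i, p (rep i) = p i)
    (hrep_eq : ∀ i j, p i = p j → rep i = rep j) (F : Finset (Sym2 V)) :
    IsCompatibleForest ⊤ v p F ↔ IsRootedForest ((univ.image rep).map v) F ∧
      ∀ i, (edgeGraph F).Reachable (v i) (v (rep i)) := by
  have mem_roots : ∀ i, v (rep i) ∈ (univ.image rep).map v := fun i =>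
    mem_map_of_mem v (mem_image_of_mem rep (mem_univ i))
  constructor
  · rintro ⟨hsub, hacyc, hreach, hcover⟩
    have reach_rep : ∀ i, (edgeGraph F).Reachable (v i) (v (rep i)) := fun i =>
      (hreach i (rep i) (hp _) (hp _)).2 (hrep i).symm
    refine ⟨⟨hsub, hacyc, fun w => ?_⟩, reach_rep⟩
    obtain ⟨i, -, hwi⟩ := hcover w
    refine ⟨v (rep i), ⟨mem_roots i, hwi.trans (reach_rep i)⟩, ?_⟩
    rintro _ ⟨hroot, hwj⟩
    obtain ⟨_, hj, rfl⟩ := mem_map.1 hroot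
    obtain ⟨j, -, rfl⟩ := mem_image.1 hj
    have hji := (hreach j i (hp _) (hp _)).1 ((reach_rep j).trans (hwj.symm.trans hwi))
    rw [hrep_eq j i hji]
  · rintro ⟨hforest, reach_rep⟩
    refine ⟨hforest.subset_edgeSet, hforest.isAcyclic,
      fun i j _ _ => ⟨fun hij => ?_, fun hij => ?_⟩, fun w => ?_⟩
    · have hroots := hforest.eq_of_reachable (mem_roots i) (mem_roots j)
        ((reach_rep i).symm.trans (hij.trans (reach_rep j)))
      rw [← hrep i, v.injective hroots, hrep j]
    · exact (reach_rep i).trans (hrep_eq i j hij ▸ (reach_rep j).symm)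
    · obtain ⟨_, ⟨hroot, hw⟩, -⟩ := hforest.existsUnique_root w
      obtain ⟨i, -, rfl⟩ := mem_map.1 hroot
      exact ⟨i, hp i, hw⟩

theorem forestPoly_const (x : Sym2 V → R) (v : Fin m ↪ V) (r : Fin m) (k : ℕ) :
    forestPoly ⊤ x v (fun _ => some k) = weightSum x (IsRootedForest {v r}) := by
  rw [forestPoly_top_eq_weightSum]
  refine weightSum_congr x fun F => ?_
  rw [isCompatibleForest_top_iff v (rep := fun _ => r) (fun _ => Option.some_ne_none k)
    (fun _ => rfl) fun _ _ _ => rfl, image_const ⟨r, mem_univ r⟩, map_singleton]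
  refine and_iff_left_of_imp fun h i => ?_
  obtain ⟨w, ⟨hw, hiw⟩, -⟩ := h.existsUnique_root (v i)
  exact mem_singleton.1 hw ▸ hiw

theorem forestPoly_val (x : Sym2 V → R) (v : Fin m ↪ V) :
    forestPoly ⊤ x v (fun i => some (i : ℕ)) = weightSum x (IsRootedForest (univ.map v)) := by
  rw [forestPoly_top_eq_weightSum]
  refine weightSum_congr x fun F => ?_
  rw [isCompatibleForest_top_iff v (rep := id) (fun i => Option.some_ne_none (i : ℕ))
    (fun _ => rfl) fun _ _ h => Fin.ext (Option.some_injective _ h), image_id]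
  exact and_iff_left fun i => .rfl

theorem forestPoly_pair (x : Sym2 V → R) (v : Fin m ↪ V) {p q : Fin m} (hpq : p ≠ q) :
    forestPoly ⊤ x v (fun i => if (i : ℕ) = q then some (p : ℕ) else some (i : ℕ)) =
      -responseMatrix (univ.map v) (weightedLaplacian x) (v q) (v p) := by
  rw [forestPoly_top_eq_weightSum, responseMatrix_weightedLaplacian_apply x
    (mem_map_of_mem v (mem_univ q)) (mem_map_of_mem v (mem_univ p)) (v.injective.ne hpq.symm),
    neg_neg, ← map_erase]
  refine weightSum_congr x fun F => ?_
  have himage : univ.image (fun i => if i = q then p else i) = univ.erase q := by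
    ext i
    simp only [mem_image, mem_univ, true_and, mem_erase, and_true]
    refine ⟨?_, fun hi => ⟨i, if_neg hi⟩⟩
    rintro ⟨j, rfl⟩
    split_ifs with hj
    exacts [hpq, hj]
  rw [isCompatibleForest_top_iff v (rep := fun i => if i = q then p else i), himage]
  · refine and_congr_right fun _ => ⟨fun h => ?_, fun h i => ?_⟩
    · simpa only [if_true] using h q
    · split_ifs with hi
      exacts [hi ▸ h, .rfl]
  all_goals grind

theorem isCompatibleForest_top_split_iff (v : Fin m ↪ V) {p q o : Fin m} {S : Finset ℕ}
    (ho : (o : ℕ) ∈ S)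
    (hsep : (p : ℕ) ∈ S ∧ (q : ℕ) ∉ S ∨ (p : ℕ) ∉ S ∧ (q : ℕ) ∈ S) (F : Finset (Sym2 V)) :
    IsCompatibleForest ⊤ v (fun i => if (i : ℕ) ∈ S then some 0 else some 1) F ↔
      IsRootedForest {v p, v q} F ∧
        ∀ i : Fin m, (i : ℕ) ∈ S ↔ (edgeGraph F).Reachable (v i) (v o) := by
  wlog hpS : (p : ℕ) ∈ S ∧ (q : ℕ) ∉ S generalizing p q
  · rw [pair_comm]
    have hqS := (hsep.resolve_left hpS).symm
    exact this (.inl hqS) hqS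
  obtain ⟨hp, hq⟩ := hpS
  have himage : univ.image (fun i : Fin m => if (i : ℕ) ∈ S then p else q) = {p, q} := by
    refine Subset.antisymm (fun i => ?_) (insert_subset ?_ (singleton_subset_iff.2 ?_))
    · simp only [mem_image, mem_univ, true_and, mem_insert, mem_singleton]
      rintro ⟨j, rfl⟩
      exact ite_eq_or_eq _ _ _
    · exact mem_image.2 ⟨p, mem_univ p, if_pos hp⟩
    · exact mem_image.2 ⟨q, mem_univ q, if_neg hq⟩
  have hpq : v p ≠ v q := fun h => hq (v.injective h ▸ hp)
  rw [isCompatibleForest_top_iff v (rep := fun i => if (i : ℕ) ∈ S then p else q), himage,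
    map_insert, map_singleton]
  · refine and_congr_right fun hforest => ⟨fun h i => ?_, fun h i => ?_⟩
    · have hop := h o
      have hi := h i
      rw [if_pos ho] at hop
      by_cases hiS : (i : ℕ) ∈ S
      · rw [if_pos hiS] at hi
        exact iff_of_true hiS (hi.trans hop.symm)
      · rw [if_neg hiS] at hi
        exact iff_of_false hiS fun hio =>
          hforest.not_reachable hpq (hop.symm.trans (hio.symm.trans hi))
    · have hpo := (h p).1 hp
      split_ifs with hiS
      · exact ((h i).1 hiS).trans hpo.symm
      · exact (hforest.reachable_or_reachable (v i)).resolve_left fun hip =>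
          hiS ((h i).2 (hip.trans hpo))
  all_goals grind

/-- The partitions of `{0, …, m - 1}` into two parts that separate `p` from `q`, encoded by the
part containing `0`. -/
def separatingSplits (m p q : ℕ) : Finset (Finset ℕ) :=
  (range m).powerset.filter fun S =>
    0 ∈ S ∧ S ≠ range m ∧ (p ∈ S ∧ q ∉ S ∨ p ∉ S ∧ q ∈ S)

theorem IsRootedForest.existsUnique_separatingSplit (v : Fin m ↪ V) {p q : Fin m} (hpq : p ≠ q)
    {F : Finset (Sym2 V)} (hF : IsRootedForest {v p, v q} F) :
    ∃! S, S ∈ separatingSplits m p q ∧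
      IsCompatibleForest ⊤ v (fun i => if (i : ℕ) ∈ S then some 0 else some 1) F := by
  classical
  let o : Fin m := ⟨0, p.pos⟩
  let S : Finset ℕ := ({i | (edgeGraph F).Reachable (v i) (v o)} : Finset (Fin m)).map
    Fin.valEmbedding
  have mem_S (i : Fin m) : (i : ℕ) ∈ S ↔ (edgeGraph F).Reachable (v i) (v o) := by
    simp only [S, mem_map, mem_filter_univ, Fin.valEmbedding_apply, Fin.val_inj, exists_eq_right]
  have hS : S ⊆ range m := fun k hk => by
    obtain ⟨i, -, rfl⟩ := mem_map.1 hk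
    exact mem_range.2 i.2
  have hsep : (p : ℕ) ∈ S ∧ (q : ℕ) ∉ S ∨ (p : ℕ) ∉ S ∧ (q : ℕ) ∈ S := by
    have hnot := hF.not_reachable (v.injective.ne hpq)
    rw [mem_S, mem_S]
    rcases hF.reachable_or_reachable (v o) with hop | hoq
    · exact .inl ⟨hop.symm, fun hqo => hnot (hqo.trans hop).symm⟩
    · exact .inr ⟨fun hpo => hnot (hpo.trans hoq), hoq.symm⟩
  have hne : S ≠ range m := by
    intro h
    simp only [h, mem_range, Fin.is_lt, not_true_eq_false, and_false, false_and, or_self] at hsep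
  have ho : (o : ℕ) ∈ S := (mem_S o).2 .rfl
  refine ⟨S, ⟨mem_filter.2 ⟨mem_powerset.2 hS, ho, hne, hsep⟩,
    (isCompatibleForest_top_split_iff v ho hsep F).2 ⟨hF, mem_S⟩⟩, ?_⟩
  rintro T ⟨hT, hcompat⟩
  obtain ⟨hTm, hoT, -, hsepT⟩ := mem_filter.1 hT
  have mem_T := ((isCompatibleForest_top_split_iff v (o := o) hoT hsepT F).1 hcompat).2
  ext k
  by_cases hk : k < m
  · exact (mem_T ⟨k, hk⟩).trans (mem_S ⟨k, hk⟩).symm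
  · exact iff_of_false (fun h => hk (mem_range.1 (mem_powerset.1 hTm h)))
      fun h => hk (mem_range.1 (hS h))

theorem sum_forestPoly_separatingSplits (x : Sym2 V → R) (v : Fin m ↪ V) {p q : Fin m}
    (hpq : p ≠ q) :
    ∑ S ∈ separatingSplits m p q,
      forestPoly ⊤ x v (fun i => if (i : ℕ) ∈ S then some 0 else some 1) =
      weightSum x (IsRootedForest {v p, v q}) := by
  rw [weightSum_eq_sum_of_existsUnique x fun F hF => hF.existsUnique_separatingSplit v hpq]
  refine sum_congr rfl fun S hS => ?_
  obtain ⟨-, ho, -, hsep⟩ := mem_filter.1 hS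
  rw [forestPoly_top_eq_weightSum]
  exact weightSum_congr x fun F => (and_iff_right_of_imp fun h =>
    ((isCompatibleForest_top_split_iff v (o := ⟨0, p.pos⟩) ho hsep F).1 h).1).symm

end MarkedVertices

section BlockSum

variable {m : ℕ}

theorem sum_range_sum_range_eq_sum_sum_erase {M : Type*} [AddCommMonoid M] (f : ℕ → ℕ → M)
    (g : Fin m → Fin m → M) (h : ∀ p q : Fin m, p ≠ q → f p q = g p q + g q p) :
    ∑ p ∈ range m, ∑ q ∈ range p, f p q = ∑ p, ∑ q ∈ univ.erase p, g p q := by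
  have hIio : ∀ p : Fin m, ∑ q ∈ range p, f p q = ∑ q ∈ Iio p, (g p q + g q p) := fun p => by
    rw [← Nat.Iio_eq_range, ← Fin.map_valEmbedding_Iio, sum_map]
    exact sum_congr rfl fun q hq => h p q (mem_Iio.1 hq).ne'
  rw [sum_range, sum_congr rfl fun p _ => hIio p,
    sum_comm' (t' := univ) (s' := Ioi) (by simp), sum_sum_Ioi_add_eq_sum_sum_off_diag,
    sum_comm' (t' := univ) (s' := fun p => univ.erase p) (by simp [eq_comm])]

theorem sum_pairs_forestPoly {V R : Type*} [Fintype V] [DecidableEq V] [CommRing R]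
    (x : Sym2 V → R) (v : Fin m ↪ V) (r : V) :
    ∑ p ∈ range m, ∑ q ∈ range p, ∑ S ∈ separatingSplits m p q,
        forestPoly ⊤ x v (fun i => if (i : ℕ) = q then some p else some (i : ℕ)) *
          forestPoly ⊤ x v (fun i => if (i : ℕ) ∈ S then some 0 else some 1) =
      ∑ s ∈ univ.map v, ∑ t ∈ (univ.map v).erase s,
        -responseMatrix (univ.map v) (weightedLaplacian x) s t * separatingSum x r s t := by
  simp only [sum_map, ← map_erase]
  refine sum_range_sum_range_eq_sum_sum_erase _ _ fun p q hpq => ?_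
  have hs := mem_map_of_mem v (mem_univ p)
  have ht := mem_map_of_mem v (mem_univ q)
  rw [← mul_sum, forestPoly_pair x v hpq, sum_forestPoly_separatingSplits x v hpq,
    ← separatingSum_add_separatingSum x r (v.injective.ne hpq),
    responseMatrix_weightedLaplacian_comm x ht hs, mul_add]

end BlockSum

section LaplacianMinors

open Matrix

variable {R : Type*} [CommRing R] {k m n : ℕ}

theorem minorDet_eq_det_submatrix (A : Matrix ℕ ℕ R) {I J : Finset ℕ} {f g : Fin k → ℕ}
    (hf : StrictMono f) (hg : StrictMono g) (hI : univ.image f = range n \ I)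
    (hJ : univ.image g = range n \ J) : minorDet A n I J = (A.submatrix f g).det := by
  have card_image {h : Fin k → ℕ} (hh : StrictMono h) : #(univ.image h) = k := by
    rw [card_image_of_injective _ hh.injective, card_univ, Fintype.card_fin]
  have hIcard : #(range n \ I) = k := hI ▸ card_image hf
  have hJcard : #(range n \ J) = k := hJ ▸ card_image hg
  subst hIcard
  have hf_eq := orderEmbOfFin_unique rfl (fun i => hI ▸ mem_image_of_mem f (mem_univ i)) hf
  have hg_eq := orderEmbOfFin_unique hJcard (fun i => hJ ▸ mem_image_of_mem g (mem_univ i)) hg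
  rw [minorDet, dif_pos hJcard, hf_eq, hg_eq]
  rfl

theorem val_succAbove_eq_skip (r : Fin (n + 1)) (i : Fin n) : (r.succAbove i : ℕ) = skip r i := by
  rw [skip, Fin.succAbove]
  simp only [Fin.lt_def, Fin.val_castSucc]
  split_ifs <;> rfl

theorem det_updateRow_single (A : Matrix (Fin (n + 1)) (Fin (n + 1)) R) (r c : Fin (n + 1)) :
    (A.updateRow r (Pi.single c 1)).det =
      (-1) ^ (r + c : ℕ) * (A.submatrix r.succAbove c.succAbove).det := by
  rw [← adjugate_apply, adjugate_fin_succ_eq_det_submatrix]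

theorem signedMinor_succAbove (A : Matrix (Fin (n + 2)) (Fin (n + 2)) R) (r c : Fin (n + 2))
    (i j : Fin (n + 1)) :
    signedMinor A r c (r.succAbove i) (c.succAbove j) = (-1) ^ (r + c : ℕ) * ((-1) ^ (i + j : ℕ) *
      (A.submatrix (r.succAbove ∘ i.succAbove) (c.succAbove ∘ j.succAbove)).det) := by
  have hrow : (A.updateRow (r.succAbove i) (Pi.single (c.succAbove j) 1)).submatrix
      r.succAbove c.succAbove =
      (A.submatrix r.succAbove c.succAbove).updateRow i (Pi.single j 1) := by
    ext v w
    simp only [submatrix_apply, updateRow_apply, Fin.succAbove_right_inj, Pi.single_apply]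
  rw [signedMinor, updateRow_comm _ (r.succAbove_ne i).symm, det_updateRow_single, hrow,
    det_updateRow_single, submatrix_submatrix]

theorem image_val_succAbove_succAbove (r : Fin (n + 2)) (i : Fin (n + 1)) :
    univ.image (fun v : Fin n => (r.succAbove (i.succAbove v) : ℕ)) =
      range (n + 2) \ {(r : ℕ), skip r i} := by
  ext k
  simp only [← val_succAbove_eq_skip, mem_image, mem_univ, true_and, mem_sdiff, mem_range,
    mem_insert, mem_singleton, not_or]
  constructor
  · rintro ⟨v, rfl⟩
    exact ⟨Fin.is_lt _, Fin.val_ne_of_ne (Fin.succAbove_ne _ _),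
      Fin.val_ne_of_ne (Fin.succAbove_right_injective.ne (Fin.succAbove_ne _ _))⟩
  · rintro ⟨hk, hkr, hki⟩
    lift k to Fin (n + 2) using hk
    obtain ⟨u, rfl⟩ := Fin.exists_succAbove_eq (Fin.val_ne_iff.1 hkr)
    obtain ⟨v, rfl⟩ := Fin.exists_succAbove_eq fun h : u = i => hki (h ▸ rfl)
    exact ⟨v, rfl⟩

theorem signedMinor_submatrix_val (A : Matrix ℕ ℕ R) (r c : Fin (n + 1)) (i j : Fin n) :
    signedMinor (A.submatrix Fin.val Fin.val) r c (r.succAbove i) (c.succAbove j) =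
      (-1) ^ (r + c : ℕ) * ((-1) ^ (i + j : ℕ) *
        minorDet A (n + 1) {(r : ℕ), skip r i} {(c : ℕ), skip c j}) := by
  obtain ⟨n, rfl⟩ := Nat.exists_eq_succ_of_ne_zero i.pos.ne'
  have strictMono_val (r : Fin (n + 2)) (i : Fin (n + 1)) :
      StrictMono fun v : Fin n => (r.succAbove (i.succAbove v) : ℕ) :=
    Fin.val_strictMono.comp ((Fin.strictMono_succAbove r).comp (Fin.strictMono_succAbove i))
  rw [signedMinor_succAbove, minorDet_eq_det_submatrix A (strictMono_val r i) (strictMono_val c j)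
    (image_val_succAbove_succAbove r i) (image_val_succAbove_succAbove c j)]
  rfl

theorem det_eq_det_submatrix_of_row_eq_single {V ι : Type*} [Fintype V] [DecidableEq V]
    [Fintype ι] [DecidableEq ι] {B : Matrix V V R} {e : ι → V} (he : e.Injective)
    (hB : ∀ v ∉ Set.range e, B v = Pi.single v 1) : B.det = (B.submatrix e e).det := by
  classical
  have hone : B.toSquareBlockProp (· ∉ Set.range e) = 1 := by
    ext v w
    rw [toSquareBlockProp_def, of_apply, hB v v.2, Pi.single_apply, one_apply]
    simp only [Subtype.ext_iff, eq_comm]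
  rw [twoBlockTriangular_det' B (· ∉ Set.range e) fun v hv w hw => ?_, hone, det_one, one_mul]
  · let range_equiv : ι ≃ {v // ¬ v ∉ Set.range e} :=
      (Equiv.ofInjective e he).trans (Equiv.subtypeEquivRight fun _ => not_not.symm)
    exact (det_submatrix_equiv_self range_equiv _).symm
  · rw [hB v hv, Pi.single_eq_of_ne (ne_of_mem_of_not_mem (not_not.1 hw) hv)]

/-- Enumerates, in increasing order, what is left of `{0, …, m + l - 1}` after deleting all marked
vertices `0, …, m - 1` other than `s`. -/
def unmarkedOr {m : ℕ} (l : ℕ) (s : Fin m) : Fin (l + 1) → Fin (m + l) :=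
  Fin.cons (Fin.castAdd l s) (Fin.natAdd m)

theorem strictMono_unmarkedOr (l : ℕ) (s : Fin m) : StrictMono (unmarkedOr l s) := by
  intro u v huv
  induction v using Fin.cases with
  | zero => exact absurd huv (Fin.not_lt_zero u)
  | succ v =>
    induction u using Fin.cases with
    | zero => exact Fin.lt_def.2 (s.2.trans_le (Nat.le_add_right m v))
    | succ u => exact (Fin.strictMono_natAdd m) (Fin.succ_lt_succ_iff.1 huv)

theorem mem_range_unmarkedOr {l : ℕ} {s : Fin m} {v : Fin (m + l)} :
    v ∈ Set.range (unmarkedOr l s) ↔ v = Fin.castAdd l s ∨ m ≤ v := by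
  rw [unmarkedOr, Fin.range_cons, Set.mem_insert_iff, Fin.range_natAdd, Set.mem_ofPred_eq]

theorem image_val_unmarkedOr (l : ℕ) (s : Fin m) :
    univ.image (fun v => (unmarkedOr l s v : ℕ)) = range (m + l) \ (range m \ {(s : ℕ)}) := by
  have hrange : ∀ k : ℕ, k ∈ univ.image (fun v => (unmarkedOr l s v : ℕ)) ↔
      ∃ v : Fin (m + l), (v = Fin.castAdd l s ∨ m ≤ v) ∧ v = k := fun k => by
    simp only [← mem_range_unmarkedOr, mem_image, mem_univ, true_and, Set.exists_range_iff]
  ext k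
  simp only [hrange, Fin.exists_iff, Fin.ext_iff, Fin.val_castAdd, mem_sdiff, mem_range,
    mem_singleton]
  grind

theorem minorDet_range_sdiff_singleton (A : Matrix ℕ ℕ R) (hm : m ≤ n) (s t : Fin m) :
    minorDet A n (range m \ {(s : ℕ)}) (range m \ {(t : ℕ)}) =
      responseMatrix (univ.map (Fin.castLEEmb hm)) (A.submatrix Fin.val Fin.val)
        (Fin.castLEEmb hm s) (Fin.castLEEmb hm t) := by
  obtain ⟨l, rfl⟩ := Nat.exists_eq_add_of_le hm
  set M := univ.map (Fin.castLEEmb hm) with hM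
  set L : Matrix (Fin (m + l)) (Fin (m + l)) R := A.submatrix Fin.val Fin.val
  have strictMono_val (s : Fin m) : StrictMono fun v => (unmarkedOr l s v : ℕ) :=
    Fin.val_strictMono.comp (strictMono_unmarkedOr l s)
  have mem_M {v : Fin (m + l)} : v ∈ M ↔ (v : ℕ) < m := by
    rw [hM, mem_map]
    exact ⟨fun ⟨i, _, hi⟩ => hi ▸ i.2, fun hv => ⟨⟨v, hv⟩, mem_univ _, rfl⟩⟩
  have hrows : ∀ v ∉ Set.range (unmarkedOr l t),
      (dirichlet M L).updateRow (Fin.castLEEmb hm t) (L (Fin.castLEEmb hm s)) v =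
        Pi.single v 1 := by
    intro v hv
    obtain ⟨hvt, hvm⟩ := not_or.1 (mem_range_unmarkedOr.not.1 hv)
    exact (updateRow_ne hvt).trans (dirichlet_apply_of_mem L (mem_M.2 (not_le.1 hvm)))
  rw [responseMatrix_apply,
    det_eq_det_submatrix_of_row_eq_single (strictMono_unmarkedOr l t).injective hrows,
    minorDet_eq_det_submatrix A (strictMono_val s) (strictMono_val t) (image_val_unmarkedOr l s)
      (image_val_unmarkedOr l t)]
  congr 1
  ext v w
  induction v using Fin.cases with
  | zero => exact (congrFun (updateRow_self (M := dirichlet M L) (i := Fin.castLEEmb hm t)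
      (b := L (Fin.castLEEmb hm s))) (unmarkedOr l t w)).symm
  | succ v =>
    have hv : Fin.natAdd m v ∉ M := mem_M.not.2 (Nat.le_add_right m v).not_gt
    have hvt : Fin.natAdd m v ≠ Fin.castLEEmb hm t :=
      fun h => hv (h ▸ mem_map_of_mem _ (mem_univ t))
    exact (congrFun ((updateRow_ne hvt).trans (dirichlet_apply_of_notMem L hv)) _).symm

theorem lapRHS_eq_sum (a : ℕ → ℕ → R) (hm : k + 1 ≤ n) (r c : Fin (k + 1)) (j : Fin k) :
    lapRHS a n (k + 1) r c j =
      ∑ s ∈ (univ.map (Fin.castLEEmb hm)).erase (Fin.castLEEmb hm r),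
        signedMinor ((lap a n).submatrix Fin.val Fin.val) (Fin.castLEEmb hm r)
          (Fin.castLEEmb hm c) s (Fin.castLEEmb hm (c.succAbove j)) *
        responseMatrix (univ.map (Fin.castLEEmb hm)) ((lap a n).submatrix Fin.val Fin.val) s
          (Fin.castLEEmb hm (c.succAbove j)) := by
  obtain ⟨n, rfl⟩ := Nat.exists_eq_succ_of_ne_zero (k.succ_pos.trans_le hm).ne'
  have hk : k ≤ n := Nat.succ_le_succ_iff.1 hm
  have castLE_succAbove (r : Fin (k + 1)) (i : Fin k) : Fin.castLEEmb hm (r.succAbove i) =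
      (Fin.castLEEmb hm r).succAbove (Fin.castLEEmb hk i) :=
    Fin.ext <| (val_succAbove_eq_skip r i).trans
      (val_succAbove_eq_skip (Fin.castLEEmb hm r) (Fin.castLEEmb hk i)).symm
  rw [lapRHS, mul_sum, Nat.add_sub_cancel, sum_range, ← map_erase, sum_map, ← compl_singleton,
    ← Fin.image_succAbove_univ, sum_image Fin.succAbove_right_injective.injOn]
  refine sum_congr rfl fun i _ => ?_
  rw [← minorDet_range_sdiff_singleton, castLE_succAbove, castLE_succAbove,
    signedMinor_submatrix_val, val_succAbove_eq_skip, val_succAbove_eq_skip]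
  simp only [Fin.castLEEmb_apply, Fin.val_castLE, mul_assoc]

theorem weightedLaplacian_lift_eq_submatrix_lap (a : ℕ → ℕ → R) (hsym : ∀ i j, a i j = a j i) :
    weightedLaplacian (Sym2.lift ⟨fun u w : Fin n => a u w, fun u w => hsym u w⟩) =
      (lap a n).submatrix Fin.val Fin.val := by
  ext v w
  have hoff : ∑ u : Fin n, a v u * (Pi.single u 1 : Fin n → R) w = a v w := by
    simp only [Pi.single_apply, mul_ite, mul_one, mul_zero, sum_ite_eq, mem_univ, if_true]
  calc weightedLaplacian (Sym2.lift ⟨fun u w : Fin n => a u w, fun u w => hsym u w⟩) v w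
      = ∑ u : Fin n, a v u * ((Pi.single v 1 : Fin n → R) w - (Pi.single u 1 : Fin n → R) w) :=
        Finset.sum_apply w univ _
    _ = (∑ u : Fin n, a v u) * (Pi.single v 1 : Fin n → R) w - a v w := by
        simp only [mul_sub, sum_sub_distrib, hoff, sum_mul]
    _ = lap a n v w := by
        rw [lap, ← sum_range (a v)]
        by_cases hvw : v = w
        · rw [hvw, Pi.single_eq_same, mul_one, if_pos rfl, sdiff_singleton_eq_erase,
            sum_erase_eq_sub (mem_range.2 w.2)]
        · rw [Pi.single_eq_of_ne' hvw, mul_zero, zero_sub, if_neg (Fin.val_ne_of_ne hvw)]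

theorem sum_range_lapRHS (a : ℕ → ℕ → R) (hm : k + 1 ≤ n) (r c : Fin (k + 1)) :
    ∑ j ∈ range k, lapRHS a n (k + 1) r c j =
      ∑ t ∈ (univ.map (Fin.castLEEmb hm)).erase (Fin.castLEEmb hm c),
        ∑ s ∈ (univ.map (Fin.castLEEmb hm)).erase (Fin.castLEEmb hm r),
          signedMinor ((lap a n).submatrix Fin.val Fin.val) (Fin.castLEEmb hm r)
            (Fin.castLEEmb hm c) s t *
          responseMatrix (univ.map (Fin.castLEEmb hm)) ((lap a n).submatrix Fin.val Fin.val)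
            s t := by
  simp only [sum_range, lapRHS_eq_sum a hm]
  rw [← map_erase _ _ c, sum_map, ← compl_singleton, ← Fin.image_succAbove_univ,
    sum_image Fin.succAbove_right_injective.injOn]

theorem lapRHS_eq_forestPoly_mul_forestPoly (a : ℕ → ℕ → R) (hsym : ∀ i j, a i j = a j i)
    (hm : k + 1 ≤ n) (r c : Fin (k + 1)) (j : Fin k) :
    lapRHS a n (k + 1) r c j =
      forestPoly ⊤ (Sym2.lift ⟨fun u w : Fin n => a u w, fun u w => hsym u w⟩)
          (Fin.castLEEmb hm) (fun _ => some 0) *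
        forestPoly ⊤ (Sym2.lift ⟨fun u w : Fin n => a u w, fun u w => hsym u w⟩)
          (Fin.castLEEmb hm) (fun i => some (i : ℕ)) := by
  have mem_M (i : Fin (k + 1)) : Fin.castLEEmb hm i ∈ univ.map (Fin.castLEEmb hm) :=
    mem_map_of_mem _ (mem_univ i)
  rw [lapRHS_eq_sum a hm, ← weightedLaplacian_lift_eq_submatrix_lap a hsym,
    sum_signedMinor_mul_responseMatrix (weightedLaplacian_mulVec_one _) (mem_M r) (mem_M c)
      (mem_M _) ((Fin.castLEEmb hm).injective.ne (c.succAbove_ne j)),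
    det_dirichlet_weightedLaplacian _ (singleton_nonempty _),
    det_dirichlet_weightedLaplacian _ ⟨_, mem_M r⟩, forestPoly_const _ _ r, forestPoly_val]

end LaplacianMinors

theorem block_sum_general {R : Type*} [CommRing R] (n m : ℕ) (hm : m ≤ n)
    (a : ℕ → ℕ → R) (hsym : ∀ i j, a i j = a j i) (r c : ℕ) (hr : r < m) (hc : c < m) :
    let x : Sym2 (Fin n) → R := Sym2.lift ⟨fun u w => a u w, fun u w => hsym u w⟩
    let v : Fin m → Fin n := Fin.castLE hm
    let Φ : (Fin m → Option ℕ) → R := fun p => forestPoly (⊤ : SimpleGraph (Fin n)) x v p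
    let allNF : R :=
      ∑ p ∈ Finset.range m, ∑ q ∈ Finset.range p,
        ∑ S ∈ (Finset.range m).powerset.filter
            (fun S => 0 ∈ S ∧ S ≠ Finset.range m ∧
              ((p ∈ S ∧ q ∉ S) ∨ (p ∉ S ∧ q ∈ S))),
          Φ (fun i => if (i : ℕ) = q then some p else some (i : ℕ)) *
            Φ (fun i => if (i : ℕ) ∈ S then some 0 else some 1)
    (∑ j' ∈ Finset.range (m - 1), lapRHS a n m r c j') = allNF ∧
      ((m - 1 : ℕ) : R) * (Φ (fun _ => some 0) * Φ (fun i => some (i : ℕ))) =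
        ∑ j' ∈ Finset.range (m - 1), lapRHS a n m r c j' := by
  intro x v Φ allNF
  obtain ⟨k, rfl⟩ := Nat.exists_eq_succ_of_ne_zero (Nat.ne_zero_of_lt hr)
  lift r to Fin (k + 1) using hr
  lift c to Fin (k + 1) using hc
  rw [Nat.succ_sub_one]
  constructor
  · rw [sum_range_lapRHS a hm, ← weightedLaplacian_lift_eq_submatrix_lap a hsym,
      sum_signedMinor_mul_responseMatrix_weightedLaplacian]
    exact (sum_pairs_forestPoly x (Fin.castLEEmb hm) _).symm
  · rw [sum_range, sum_congr rfl fun j _ => lapRHS_eq_forestPoly_mul_forestPoly a hsym hm r c j,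
      sum_const, card_univ, Fintype.card_fin, nsmul_eq_mul]
    rfl

/-- **Theorem 3.5 ("every block sums to all non-forbidden monomials").**  Fix a removed
column `c < m` (and removed row `m`, i.e. the last marked vertex, index `m − 1`).
Summing the `m − 1` identities `L_{m,c}(1), …, L_{m,c}(m−1)` of the block gives an
identity whose left-hand side is `(m−1) · Φ_{(1,…,1)} Φ_{(1,2,…,m)}` and whose
right-hand side contains exactly one copy of each non-forbidden monomial `A B`: `A`
pairs two marked vertices `q < p` (others singletons) and `B` is a 2-part partition
(encoded by its part `S` containing vertex `0`) separating `p` from `q`; everything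
evaluated on the complete graph on `n ≥ m` vertices with symmetric edge weights and the
first `m` vertices marked. -/
theorem block_sum {R : Type*} [CommRing R] (n m : ℕ) (hm : m ≤ n) (h3 : 3 ≤ m)
    (a : ℕ → ℕ → R) (hsym : ∀ i j, a i j = a j i) (c : ℕ) (hc : c < m) :
    let x : Sym2 (Fin n) → R := Sym2.lift ⟨fun u w => a u w, fun u w => hsym u w⟩
    let v : Fin m → Fin n := Fin.castLE hm
    let Φ : (Fin m → Option ℕ) → R := fun p => forestPoly (⊤ : SimpleGraph (Fin n)) x v p
    let allNF : R :=
      ∑ p ∈ Finset.range m, ∑ q ∈ Finset.range p,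
        ∑ S ∈ (Finset.range m).powerset.filter
            (fun S => 0 ∈ S ∧ S ≠ Finset.range m ∧
              ((p ∈ S ∧ q ∉ S) ∨ (p ∉ S ∧ q ∈ S))),
          Φ (fun i => if (i : ℕ) = q then some p else some (i : ℕ)) *
            Φ (fun i => if (i : ℕ) ∈ S then some 0 else some 1)
    (∑ j' ∈ Finset.range (m - 1), lapRHS a n m (m - 1) c j') = allNF ∧
      ((m - 1 : ℕ) : R) * (Φ (fun _ => some 0) * Φ (fun i => some (i : ℕ))) =
        ∑ j' ∈ Finset.range (m - 1), lapRHS a n m (m - 1) c j' :=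
  block_sum_general n m hm a hsym (m - 1) c (Nat.sub_one_lt_of_lt hc) hc
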